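/- Let n and r be integers with 3 ≤ r ≤ n − 3, and let f_inv : F → 𝔽₂ be defined by f_inv(x) = tr(x^{2^n − 2}). Then nl_r(f_inv) ≥ 2^{n−1} − 2^{(1 − 2^{−r})·n − 2^{−(r−1)}} − 3·2^{(1/2 − 2^{−r})·n}. -/

import Mathlib

noncomputable section

/-- `Fq n` is the finite field with `2 ^ n` elements. -/
abbrev Fq (n : ℕ) : Type := GaloisField 2 n

/-- The absolute trace map `tr x = x + x^2 + x^4 + ⋯ + x^(2^(n-1))` from `Fq n` to `𝔽₂`. -/
def tr {n : ℕ} (x : Fq n) : ZMod 2 := Algebra.trace (ZMod 2) (Fq n) x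

/-- The derivative of `f` with respect to `a`. -/
def der {n : ℕ} (f : Fq n → ZMod 2) (a : Fq n) : Fq n → ZMod 2 :=
  fun x => f x + f (x + a)

/-- Iterated derivatives along a list of directions (head applied last/outermost). -/
def derIter {n : ℕ} (f : Fq n → ZMod 2) : List (Fq n) → (Fq n → ZMod 2)
  | [] => f
  | a :: as => der (derIter f as) a

/-- `g` has algebraic degree at most `r`: all `(r+1)`-th order derivatives vanish. -/
def degLE {n : ℕ} (g : Fq n → ZMod 2) (r : ℕ) : Prop :=
  ∀ l : List (Fq n), l.length = r + 1 → derIter g l = fun _ => 0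

/-- Hamming distance between two Boolean functions on `Fq n`. -/
def hdist {n : ℕ} (f g : Fq n → ZMod 2) : ℕ :=
  {x : Fq n | f x ≠ g x}.ncard

/-- The `r`-th order nonlinearity of `f`. -/
def nl {n : ℕ} (r : ℕ) (f : Fq n → ZMod 2) : ℕ :=
  sInf {d : ℕ | ∃ g : Fq n → ZMod 2, degLE g r ∧ d = hdist f g}

/-- The linear kernel of `f`: directions along which the derivative is constant. -/
def linKer {n : ℕ} (f : Fq n → ZMod 2) : Set (Fq n) :=
  {b | ∃ c : ZMod 2, ∀ x, der f b x = c}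

/-- The weight of a Boolean function on `Fq n`. -/
def wt {n : ℕ} (f : Fq n → ZMod 2) : ℕ := {x : Fq n | f x = 1}.ncard

open Polynomial in
/-- sparse polynomial with base-`s` digits -/
def stP {k : Type*} [Field k] (h s : ℕ) (c : Fin (h+1) × Fin h → k) : k[X] :=
  ∑ i, C (c i) * X ^ ((i.1 : ℕ) * s + (i.2 : ℕ))

open Polynomial in
def stQ {k : Type*} [Field k] (h s : ℕ) (c : Fin (h+1) × Fin h → k) : k[X] :=
  ∑ i, C (c i ^ s) * X ^ ((i.1 : ℕ) + (i.2 : ℕ) * s)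

section stepanov
open Polynomial
variable {k : Type*} [Field k]

lemma stP_coeff (h s : ℕ) (hs : h ≤ s) (c : Fin (h+1) × Fin h → k) (i : Fin (h+1) × Fin h) :
    (stP h s c).coeff ((i.1 : ℕ) * s + (i.2 : ℕ)) = c i := by
  unfold stP
  rw [finsetSum_coeff, Finset.sum_eq_single i]
  · simp
  · rintro ⟨b1, b2⟩ - hb
    rw [coeff_C_mul, coeff_X_pow, if_neg, mul_zero]
    intro heq
    apply hb
    obtain ⟨i1, i2⟩ := i
    simp only at heq
    have h1 := b2.2
    have h2 := i2.2
    have e2 : (i2 : ℕ) = b2 := by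
      have := congrArg (· % s) heq
      simpa [Nat.add_mod, Nat.mod_eq_of_lt (show (i2:ℕ) < s by omega),
        Nat.mod_eq_of_lt (show (b2:ℕ) < s by omega)] using this
    have e1 : (i1 : ℕ) = b1 := by
      rw [e2] at heq
      have : (i1 : ℕ) * s = b1 * s := by omega
      exact Nat.eq_of_mul_eq_mul_right (by omega) this
    ext <;> simp [e1, e2]
  · simp

lemma stP_inj (h s : ℕ) (hs : h ≤ s) (c : Fin (h+1) × Fin h → k) (hc : stP h s c = 0) : c = 0 := by
  ext i
  rw [← stP_coeff h s hs c i, hc]; simp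

lemma stP_coeff_ne (h s : ℕ) (hs : h ≤ s) (c : Fin (h+1) × Fin h → k) (m : ℕ)
    (hm : (stP h s c).coeff m ≠ 0) : m % s < h ∧ m ≤ h * s + h := by
  unfold stP at hm
  rw [finsetSum_coeff] at hm
  obtain ⟨⟨i1, i2⟩, -, hi⟩ := Finset.exists_ne_zero_of_sum_ne_zero hm
  rw [coeff_C_mul, coeff_X_pow] at hi
  have hm' : m = (i1:ℕ) * s + i2 := by
    by_contra hne
    simp [hne] at hi
  have h1 := i1.2
  have h2 := i2.2
  have : (i1:ℕ) * s ≤ h * s := Nat.mul_le_mul_right _ (by omega)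
  refine ⟨?_, by omega⟩
  rw [hm', Nat.add_mod]
  simp [Nat.mod_eq_of_lt (show (i2:ℕ) < s by omega)]

lemma stP_natDegree (h s : ℕ) (c : Fin (h+1) × Fin h → k) :
    (stP h s c).natDegree ≤ h * s + h := by
  unfold stP
  refine natDegree_sum_le_of_forall_le _ _ ?_
  rintro ⟨i1, i2⟩ -
  refine (natDegree_C_mul_X_pow_le _ _).trans ?_
  have h1 := i1.2
  have h2 := i2.2
  have : (i1:ℕ) * s ≤ h * s := Nat.mul_le_mul_right _ (by omega)
  simp only
  omega

lemma stQ_natDegree (h s : ℕ) (hh : 0 < h) (c : Fin (h+1) × Fin h → k) :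
    (stQ h s c).natDegree + s ≤ h + h * s := by
  unfold stQ
  have : (∑ i, C (c i ^ s) * X ^ ((i.1 : ℕ) + (i.2 : ℕ) * s)).natDegree ≤ h + (h-1) * s := by
    refine natDegree_sum_le_of_forall_le _ _ ?_
    rintro ⟨i1, i2⟩ -
    refine (natDegree_C_mul_X_pow_le _ _).trans ?_
    have h1 := i1.2
    have h2 := i2.2
    have : (i2:ℕ) * s ≤ (h-1) * s := Nat.mul_le_mul_right _ (by omega)
    simp only
    omega
  obtain ⟨h, rfl⟩ : ∃ h', h = h' + 1 := ⟨h-1, by omega⟩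
  simp only [Nat.add_sub_cancel] at this
  nlinarith

lemma stP_add (h s : ℕ) (c d : Fin (h+1) × Fin h → k) :
    stP h s (c + d) = stP h s c + stP h s d := by
  simp [stP, add_mul, Finset.sum_add_distrib]

lemma stQ_sub [CharP k 2] (h e : ℕ) (c d : Fin (h+1) × Fin h → k) :
    stQ h (2^e) (c - d) = stQ h (2^e) c - stQ h (2^e) d := by
  simp [stQ, sub_pow_char_pow, sub_mul, Finset.sum_sub_distrib, -map_pow]

lemma st_eval [CharP k 2] [Fintype k] (h e : ℕ) (hc : Fintype.card k = (2^e)^2)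
    (c : Fin (h+1) × Fin h → k) (x : k) :
    (stP h (2^e) c).eval x ^ (2^e) = (stQ h (2^e) c).eval x := by
  have hx : x ^ ((2^e)^2) = x := by rw [← hc]; exact FiniteField.pow_card x
  simp only [stP, stQ, eval_finsetSum]
  rw [sum_pow_char_pow]
  refine Finset.sum_congr rfl fun i _ => ?_
  simp only [eval_mul, eval_C, eval_pow, eval_X]
  rw [mul_pow]
  congr 1
  rw [← pow_mul, add_mul, pow_add, pow_add, mul_assoc, ← sq, mul_comm (i.1:ℕ), pow_mul, hx]

/-- digit argument -/
lemma st_indep (h s : ℕ) (hs : s = h + h) (hh : 0 < h) (τ : k[X]) (hτ : τ.Monic)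
    (hd : τ.natDegree = s) (c d : Fin (h+1) × Fin h → k)
    (H : X ^ h * stP h s c + τ * stP h s d = 0) : c = 0 ∧ d = 0 := by
  have key : stP h s d = 0 := by
    by_contra hne
    have hne' : stP h s c ≠ 0 := by
      intro h0
      rw [h0, mul_zero, zero_add] at H
      exact (mul_ne_zero hτ.ne_zero hne) H
    have e1 : (X ^ h * stP h s c).natDegree = h + (stP h s c).natDegree := by
      rw [natDegree_mul (pow_ne_zero _ X_ne_zero) hne', natDegree_X_pow]
    have e2 : (τ * stP h s d).natDegree = s + (stP h s d).natDegree := by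
      rw [natDegree_mul hτ.ne_zero hne, hd]
    have e3 : (X ^ h * stP h s c).natDegree = (τ * stP h s d).natDegree := by
      rw [eq_neg_of_add_eq_zero_left H, natDegree_neg]
    have m1 := (stP_coeff_ne h s (by omega) c (stP h s c).natDegree
      (by rw [coeff_natDegree]; exact leadingCoeff_ne_zero.mpr hne')).1
    have m2 := (stP_coeff_ne h s (by omega) d (stP h s d).natDegree
      (by rw [coeff_natDegree]; exact leadingCoeff_ne_zero.mpr hne)).1
    rw [e1, e2] at e3
    have e4 := congrArg (· % s) e3
    simp only [Nat.add_mod_left] at e4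
    rw [Nat.add_mod, Nat.mod_eq_of_lt (show h < s by omega),
      Nat.mod_eq_of_lt (show h + (stP h s c).natDegree % s < s by omega)] at e4
    omega
  have key2 : stP h s c = 0 := by
    rw [key, mul_zero, add_zero] at H
    rcases mul_eq_zero.mp H with h1 | h1
    · exact absurd h1 (pow_ne_zero _ X_ne_zero)
    · exact h1
  exact ⟨stP_inj h s (by omega) c key2, stP_inj h s (by omega) d key⟩

/-- `X^h * t` with `t = ∑ w^(2^j)`, `w = X + a/X + δ`. -/
def stTau (e : ℕ) (a δ : k) : k[X] :=
  ∑ j ∈ Finset.range e, (X^2 + C δ * X + C a) ^ (2^j) * X ^ (2^(e-1) - 2^j)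

lemma quad_deg (a δ : k) : (X^2 + C δ * X + C a : k[X]).natDegree = 2 := by
  have := natDegree_quadratic (a := (1:k)) (b := δ) (c := a) one_ne_zero
  simpa using this
lemma quad_monic (a δ : k) : (X^2 + C δ * X + C a : k[X]).Monic := by
  rw [Monic, leadingCoeff, quad_deg]
  simp

lemma stTau_spec (e : ℕ) (he : 1 ≤ e) (a δ : k) :
    (stTau e a δ).Monic ∧ (stTau e a δ).natDegree = 2^e := by
  obtain ⟨e, rfl⟩ : ∃ e', e = e' + 1 := ⟨e-1, by omega⟩
  unfold stTau
  rw [Finset.sum_range_succ]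
  simp only [Nat.add_sub_cancel, Nat.sub_self, pow_zero, mul_one]
  have hm : ((X^2 + C δ * X + C a : k[X]) ^ (2^e)).Monic := (quad_monic a δ).pow _
  have hd : ((X^2 + C δ * X + C a : k[X]) ^ (2^e)).natDegree = 2^(e+1) := by
    rw [(quad_monic a δ).natDegree_pow, quad_deg]; ring
  have hlt : (∑ j ∈ Finset.range e, (X^2 + C δ * X + C a : k[X]) ^ (2^j) * X ^ (2^e - 2^j)).degree
      < ((X^2 + C δ * X + C a : k[X]) ^ (2^e)).degree := by
    rw [degree_eq_natDegree hm.ne_zero, hd]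
    refine (degree_sum_le _ _).trans_lt ?_
    rw [Finset.sup_lt_iff (by exact WithBot.bot_lt_coe _)]
    intro j hj
    have hj' := Finset.mem_range.mp hj
    have : 2^j < 2^e := Nat.pow_lt_pow_right (by norm_num) hj'
    refine degree_le_natDegree.trans_lt ?_
    refine WithBot.coe_lt_coe.mpr ?_
    rw [Monic.natDegree_mul ((quad_monic a δ).pow _) (monic_X_pow _),
      (quad_monic a δ).natDegree_pow, quad_deg, natDegree_X_pow, pow_succ]
    simp only [Nat.cast_id]
    omega
  refine ⟨hm.add_of_right hlt, ?_⟩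
  rw [natDegree_add_eq_right_of_degree_lt hlt, hd]

lemma stTau_eval [CharP k 2] (e : ℕ) (he : 1 ≤ e) (a δ x y : k) (hx : x ≠ 0)
    (hy : y^2 + y = x + a/x + δ) :
    (stTau e a δ).eval x = x ^ (2^(e-1)) * (y ^ (2^e) + y) := by
  have hw : x^2 + δ * x + a = x * (y^2+y) := by
    rw [hy]; field_simp; ring
  have tel : ∀ e : ℕ, ∑ j ∈ Finset.range e, (y^2+y)^(2^j) = y^(2^e) + y := by
    intro e
    induction e with
    | zero => simp [CharTwo.add_self_eq_zero]
    | succ e ih =>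
      rw [Finset.sum_range_succ, ih, add_pow_char_pow, ← pow_mul, ← pow_succ']
      have := CharTwo.add_self_eq_zero (y^(2^e))
      linear_combination this
  unfold stTau
  rw [eval_finsetSum, ← tel, Finset.mul_sum]
  refine Finset.sum_congr rfl fun j hj => ?_
  have hj' := Finset.mem_range.mp hj
  have : 2^j ≤ 2^(e-1) := Nat.pow_le_pow_right (by norm_num) (by omega)
  simp only [eval_mul, eval_pow, eval_add, eval_X, eval_C]
  rw [hw, mul_pow]
  have h2 : x ^ (2^(e-1)) = x^(2^j) * x^(2^(e-1)-2^j) := by rw [← pow_add]; congr 1; omega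
  rw [h2]; ring
end stepanov

section stepanov
open Polynomial
variable {k : Type*} [Field k]

abbrev stI (k : Type*) (h : ℕ) := Fin 4 → Fin (h+1) × Fin h → k

def stPhi1 (e : ℕ) (a δ : k) (c : stI k (2^(e-1))) : k[X] :=
  X ^ (2^(e-1)) * stQ (2^(e-1)) (2^e) (c 0) + stTau e a δ * stQ (2^(e-1)) (2^e) (c 1)
    + (X^2 + C δ * X + C a) * X ^ (2^(e-1) - 1) * stQ (2^(e-1)) (2^e) (c 3)

def stPhi2 (e : ℕ) (a δ : k) (c : stI k (2^(e-1))) : k[X] :=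
  X ^ (2^(e-1)) * (stQ (2^(e-1)) (2^e) (c 1) + stQ (2^(e-1)) (2^e) (c 2)
    + stQ (2^(e-1)) (2^e) (c 3)) + stTau e a δ * stQ (2^(e-1)) (2^e) (c 3)

def stA (e : ℕ) (a δ : k) (c : stI k (2^(e-1))) : k[X] :=
  X ^ (2^(e-1)) * stP (2^(e-1)) (2^e) (c 0) + stTau e a δ * stP (2^(e-1)) (2^e) (c 2)
    + (X^2 + C δ * X + C a) * X ^ (2^(e-1) - 1) * stP (2^(e-1)) (2^e) (c 3)

def stB (e : ℕ) (a δ : k) (c : stI k (2^(e-1))) : k[X] :=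
  X ^ (2^(e-1)) * stP (2^(e-1)) (2^e) (c 1 + c 2 + c 3)
   + stTau e a δ * stP (2^(e-1)) (2^e) (c 3)

lemma two_pow_pred (e : ℕ) (he : 1 ≤ e) : 2^e = 2^(e-1) + 2^(e-1) := by
  obtain ⟨e, rfl⟩ : ∃ e', e = e' + 1 := ⟨e-1, by omega⟩
  simp [pow_succ]; ring

lemma quadX_deg (e : ℕ) (a δ : k) :
    ((X^2 + C δ * X + C a) * X ^ (2^(e-1) - 1) : k[X]).natDegree ≤ 2 ^ (e-1) + 1 := by
  have h2 : 0 < 2^(e-1) := by positivity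
  refine natDegree_mul_le.trans ?_
  rw [quad_deg, natDegree_X_pow]; omega

lemma stPhi_deg (e : ℕ) (he : 2 ≤ e) (a δ : k) (c : stI k (2^(e-1))) :
    (stPhi1 e a δ c).natDegree ≤ 2^(e-1) + 2^(e-1) * 2^e ∧
    (stPhi2 e a δ c).natDegree ≤ 2^(e-1) + 2^(e-1) * 2^e := by
  have h1 := two_pow_pred e (by omega)
  have h2 : 0 < 2^(e-1) := by positivity
  have hq := fun i => stQ_natDegree (2^(e-1)) (2^e) h2 (c i)
  have hT := (stTau_spec e (by omega) a δ).2
  have hQ := quadX_deg e a δ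
  have hs : (stQ (2^(e-1)) (2^e) (c 1) + stQ (2^(e-1)) (2^e) (c 2)
    + stQ (2^(e-1)) (2^e) (c 3)).natDegree + 2^e ≤ 2^(e-1) + 2^(e-1) * 2^e := by
    have := hq 1
    have := hq 2
    have := hq 3
    have := natDegree_add_le_of_degree_le (n := 2^(e-1) + 2^(e-1) * 2^e - 2^e)
      (natDegree_add_le_of_degree_le (n := 2^(e-1) + 2^(e-1) * 2^e - 2^e)
      (p := stQ (2^(e-1)) (2^e) (c 1)) (q := stQ (2^(e-1)) (2^e) (c 2)) (by omega) (by omega))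
      (q := stQ (2^(e-1)) (2^e) (c 3)) (by omega)
    omega
  constructor
  · unfold stPhi1
    refine natDegree_add_le_of_degree_le (natDegree_add_le_of_degree_le ?_ ?_) ?_
    · refine natDegree_mul_le.trans ?_
      rw [natDegree_X_pow]; have := hq 0; omega
    · refine natDegree_mul_le.trans ?_
      have := hq 1; omega
    · refine natDegree_mul_le.trans ?_
      have := hq 3; omega
  · unfold stPhi2
    refine natDegree_add_le_of_degree_le ?_ ?_
    · refine natDegree_mul_le.trans ?_
      rw [natDegree_X_pow]; omega
    · refine natDegree_mul_le.trans ?_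
      have := hq 3; omega

lemma stAB_deg (e : ℕ) (he : 2 ≤ e) (a δ : k) (c : stI k (2^(e-1))) :
    (stA e a δ c).natDegree ≤ 2^(e-1) * 2^e + 2^(e-1) + 2^e ∧
    (stB e a δ c).natDegree ≤ 2^(e-1) * 2^e + 2^(e-1) + 2^e := by
  have h1 := two_pow_pred e (by omega)
  have h2 : 0 < 2^(e-1) := by positivity
  have hq := fun c => stP_natDegree (k := k) (2^(e-1)) (2^e) c
  have hT := (stTau_spec e (by omega) a δ).2
  have hQ := quadX_deg e a δ
  constructor
  · unfold stA
    refine natDegree_add_le_of_degree_le (natDegree_add_le_of_degree_le ?_ ?_) ?_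
    · refine natDegree_mul_le.trans ?_
      rw [natDegree_X_pow]; have := hq (c 0); omega
    · refine natDegree_mul_le.trans ?_
      have := hq (c 2); omega
    · refine natDegree_mul_le.trans ?_
      have := hq (c 3); omega
  · unfold stB
    refine natDegree_add_le_of_degree_le ?_ ?_
    · refine natDegree_mul_le.trans ?_
      rw [natDegree_X_pow]; have := hq (c 1 + c 2 + c 3); omega
    · refine natDegree_mul_le.trans ?_
      have := hq (c 3); omega

lemma st_exists [CharP k 2] [Fintype k] (e : ℕ) (he : 2 ≤ e) (a δ : k) :
    ∃ c : stI k (2^(e-1)), c ≠ 0 ∧ stPhi1 e a δ c = 0 ∧ stPhi2 e a δ c = 0 := by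
  classical
  set N := 2^(e-1) + 2^(e-1) * 2^e + 1 with hN
  let Φ : stI k (2^(e-1)) → (Fin 2 × Fin N → k) := fun c p =>
    if p.1 = 0 then (stPhi1 e a δ c).coeff p.2 else (stPhi2 e a δ c).coeff p.2
  have hcard : Fintype.card (Fin 2 × Fin N → k) < Fintype.card (stI k (2^(e-1))) := by
    have hk : 1 < Fintype.card k := Fintype.one_lt_card
    simp only [stI, Fintype.card_fun, Fintype.card_prod, Fintype.card_fin]
    rw [← pow_mul]
    refine Nat.pow_lt_pow_right hk ?_
    rw [hN, two_pow_pred e (by omega)]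
    have h2 : 2 ≤ 2^(e-1) := by
      calc 2 = 2^1 := rfl
        _ ≤ _ := Nat.pow_le_pow_right (by norm_num) (by omega)
    nlinarith
  obtain ⟨c, d, hne, heq⟩ := Fintype.exists_ne_map_eq_of_card_lt Φ hcard
  have hs1 : stPhi1 e a δ (c - d) = stPhi1 e a δ c - stPhi1 e a δ d := by
    simp only [stPhi1, Pi.sub_apply, stQ_sub]; ring
  have hs2 : stPhi2 e a δ (c - d) = stPhi2 e a δ c - stPhi2 e a δ d := by
    simp only [stPhi2, Pi.sub_apply, stQ_sub]; ring
  refine ⟨c - d, sub_ne_zero.mpr hne, ?_, ?_⟩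
  · ext m
    by_cases hm : m < N
    · have := congrFun heq (0, ⟨m, hm⟩)
      simp only [Φ, if_true] at this
      rw [hs1, coeff_sub, this]; simp
    · rw [coeff_eq_zero_of_natDegree_lt, coeff_zero]
      have := (stPhi_deg e he a δ (c - d)).1
      omega
  · ext m
    by_cases hm : m < N
    · have := congrFun heq (1, ⟨m, hm⟩)
      simp only [Φ, one_ne_zero, if_false] at this
      rw [hs2, coeff_sub, this]; simp
    · rw [coeff_eq_zero_of_natDegree_lt, coeff_zero]
      have := (stPhi_deg e he a δ (c - d)).2
      omega

lemma st_vanish [CharP k 2] [Fintype k] (e : ℕ) (he : 2 ≤ e) (hc : Fintype.card k = (2^e)^2)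
    (a δ : k) (c : stI k (2^(e-1))) (h1 : stPhi1 e a δ c = 0) (h2 : stPhi2 e a δ c = 0)
    (x y : k) (hx : x ≠ 0) (hy : y^2 + y = x + a/x + δ) :
    (stA e a δ c).eval x + (stB e a δ c).eval x * y = 0 := by
  have hpos : 0 < 2^(e-1) := by positivity
  have hT := stTau_eval e (by omega) a δ x y hx hy
  have hw : (x^2 + δ * x + a) * x ^ (2^(e-1)-1) = x ^ (2^(e-1)) * (y^2+y) := by
    have : x^2 + δ * x + a = x * (y^2+y) := by
      rw [hy]; field_simp; ring
    obtain ⟨m, hm⟩ : ∃ m, 2^(e-1) = m + 1 := ⟨2^(e-1)-1, by omega⟩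
    rw [this, hm, pow_succ]; simp; ring
  have E1 := congrArg (eval x) h1
  have E2 := congrArg (eval x) h2
  simp only [stPhi1, stPhi2, eval_add, eval_mul, eval_pow, eval_X, eval_C, eval_zero, hT, hw,
    ← st_eval _ e hc] at E1 E2
  simp only [stA, stB, stP_add, eval_add, eval_mul, eval_pow, eval_X, eval_C, hT, hw]
  generalize (stP (2^(e-1)) (2^e) (c 0)).eval x = p0 at *
  generalize (stP (2^(e-1)) (2^e) (c 1)).eval x = p1 at *
  generalize (stP (2^(e-1)) (2^e) (c 2)).eval x = p2 at *
  generalize (stP (2^(e-1)) (2^e) (c 3)).eval x = p3 at *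
  have hxh : x ^ (2^(e-1)) ≠ 0 := pow_ne_zero _ hx
  have two : (2:k) = 0 := CharTwo.two_eq_zero
  have yQ : (y ^ (2^e))^(2^e) = y := by
    rw [← pow_mul, ← sq, ← hc]; exact FiniteField.pow_card y
  have g0 : (p0 + p1 * y + (p2 + p3 * y) * y ^ (2^e)) ^ (2^e) = 0 := by
    simp only [add_pow_char_pow, mul_pow, yQ]
    apply mul_left_cancel₀ hxh
    generalize y ^ (2^e) = z at *
    linear_combination E1 + y * E2 + (- x ^ (2^(e-1)) * (y * p1 ^ (2^e) + p3 ^ (2^e) * (y^2 + y))) * two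
  have g1 := pow_eq_zero_iff (by positivity) |>.mp g0
  generalize y ^ (2^e) = z at *
  generalize x ^ (2^(e-1)) = t at *
  linear_combination t * g1 + t * (p2 * y + p3 * (y^2 + y)) * two

theorem stepanov [CharP k 2] [Fintype k] (e : ℕ) (he : 2 ≤ e)
    (hc : Fintype.card k = (2^e)^2) (a δ : k) (S : Finset k)
    (hS : ∀ x ∈ S, x ≠ 0 ∧ ∃ y, y^2 + y = x + a/x + δ) :
    S.card ≤ 2^(e-1) * 2^e + 2^(e-1) + 2^e := by
  obtain ⟨c, hc0, h1, h2⟩ := st_exists e he a δ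
  have hv : ∀ x ∈ S, (stA e a δ c).eval x = 0 ∧ (stB e a δ c).eval x = 0 := by
    intro x hx
    obtain ⟨hx0, y, hy⟩ := hS x hx
    have v1 := st_vanish e he hc a δ c h1 h2 x y hx0 hy
    have v2 := st_vanish e he hc a δ c h1 h2 x (y+1) hx0 (by
      rw [← hy]; linear_combination (y + 1) * (CharTwo.two_eq_zero : (2:k) = 0))
    have hB : (stB e a δ c).eval x = 0 := by linear_combination v2 - v1
    exact ⟨by rw [hB] at v1; simpa using v1, hB⟩
  have hpos : 0 < 2^(e-1) := by positivity
  have hs := two_pow_pred e (by omega)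
  obtain ⟨tm, td⟩ := stTau_spec e (by omega) a δ
  by_cases hB : stB e a δ c = 0
  · have hA : stA e a δ c ≠ 0 := by
      intro hA
      apply hc0
      obtain ⟨b1, b2⟩ := st_indep (2^(e-1)) (2^e) hs hpos _ tm td _ _ hB
      have hA' := hA
      unfold stA at hA'
      rw [b2] at hA'
      have z : stP (k := k) (2^(e-1)) (2^e) 0 = 0 := by simp [stP]
      rw [z, mul_zero, add_zero] at hA'
      obtain ⟨b3, b4⟩ := st_indep (2^(e-1)) (2^e) hs hpos _ tm td _ _ hA'
      rw [b4, b2, add_zero, add_zero] at b1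
      ext i j
      fin_cases i <;> simp [b1, b2, b3, b4]
    refine le_trans (card_le_degree_of_subset_roots (p := stA e a δ c) ?_) (stAB_deg e he a δ c).1
    intro x hx
    rw [mem_roots hA]; exact (hv x hx).1
  · refine le_trans (card_le_degree_of_subset_roots (p := stB e a δ c) ?_) (stAB_deg e he a δ c).2
    intro x hx
    rw [mem_roots hB]; exact (hv x hx).2
end stepanov


def chi (c : ZMod 2) : ℝ := if c = 0 then 1 else -1

lemma zmod2_cases (c : ZMod 2) : c = 0 ∨ c = 1 := by
  revert c; decide
lemma chi_zero : chi 0 = 1 := by simp [chi]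
lemma chi_one : chi 1 = -1 := by simp [chi]
lemma chi_add (a b : ZMod 2) : chi (a + b) = chi a * chi b := by
  have h : (1 : ZMod 2) + 1 = 0 := by decide
  rcases zmod2_cases a with rfl | rfl <;> rcases zmod2_cases b with rfl | rfl <;>
    simp [chi, h]
lemma chi_abs (a : ZMod 2) : |chi a| = 1 := by
  rcases zmod2_cases a with rfl | rfl <;> simp [chi]
lemma chi_sq (a : ZMod 2) : chi a * chi a = 1 := by
  rcases zmod2_cases a with rfl | rfl <;> simp [chi]

lemma sum_chi_hom {G : Type*} [AddCommGroup G] [Fintype G] (φ : G →+ ZMod 2) (a : G)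
    (ha : φ a ≠ 0) : ∑ x, chi (φ x) = 0 := by
  have h1 : φ a = 1 := (zmod2_cases _).resolve_left ha
  have h2 : ∑ x, chi (φ (x + a)) = ∑ x, chi (φ x) :=
    Equiv.sum_comp (Equiv.addRight a) (fun x => chi (φ x))
  simp only [map_add, chi_add, h1, chi_one, mul_neg, mul_one, Finset.sum_neg_distrib] at h2
  linarith

set_option linter.unusedSectionVars false
section chars
variable {k : Type*} [Field k] [Fintype k] [Algebra (ZMod 2) k]

def ps (x : k) : ℝ := chi (Algebra.trace (ZMod 2) k x)

lemma ps_add (x y : k) : ps (x + y) = ps x * ps y := by simp [ps, chi_add]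
lemma ps_zero : ps (0 : k) = 1 := by simp [ps, chi_zero]
lemma ps_abs (x : k) : |ps x| = 1 := chi_abs _

lemma tr_nondeg {b : k} (hb : b ≠ 0) : ∃ c : k, Algebra.trace (ZMod 2) k (b * c) ≠ 0 := by
  have htr := (traceForm_nondegenerate (ZMod 2) k).1 b
  simp_rw [Algebra.traceForm_apply] at htr
  by_contra! hf
  exact hb (htr hf)

lemma sum_ps (b : k) (hb : b ≠ 0) : ∑ x, ps (b * x) = 0 := by
  obtain ⟨c, hc⟩ := tr_nondeg hb
  exact sum_chi_hom ((Algebra.trace (ZMod 2) k).toAddMonoidHom.comp (AddMonoidHom.mulLeft b)) c hc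

lemma sum_ps_id : ∑ x : k, ps x = 0 := by simpa using sum_ps (1:k) one_ne_zero

lemma tr_sq [CharP k 2] (x : k) : Algebra.trace (ZMod 2) k (x^2) = Algebra.trace (ZMod 2) k x := by
  have h2 : ∀ c : ZMod 2, c = c^2 := by decide
  apply (algebraMap (ZMod 2) k).injective
  rw [h2 (Algebra.trace (ZMod 2) k x), RingHom.map_pow, FiniteField.algebraMap_trace_eq_sum_pow,
    FiniteField.algebraMap_trace_eq_sum_pow, sum_pow_char]
  exact Finset.sum_congr rfl fun i _ => by rw [← pow_mul, ← pow_mul, mul_comm]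

lemma artin_schreier [CharP k 2] (c : k) (hc : Algebra.trace (ZMod 2) k c = 0) :
    ∃ y : k, y^2 + y = c := by
  let φ : k →+ k :=
    { toFun := fun y => y^2 + y
      map_zero' := by simp
      map_add' := fun x y => by rw [CharTwo.add_sq]; ring }
  let φ' : k →ₗ[ZMod 2] k := φ.toZModLinearMap 2
  have hφ : ∀ y, φ' y = y^2 + y := fun y => rfl
  have hle : LinearMap.range φ' ≤ LinearMap.ker (Algebra.trace (ZMod 2) k) := by
    rintro _ ⟨y, rfl⟩
    rw [LinearMap.mem_ker, hφ, map_add, tr_sq, CharTwo.add_self_eq_zero]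
  have hker : Module.finrank (ZMod 2) (LinearMap.ker φ') ≤ 1 := by
    have : LinearMap.ker φ' ≤ Submodule.span (ZMod 2) {(1:k)} := by
      intro y hy
      rw [LinearMap.mem_ker, hφ] at hy
      have : y * (y + 1) = 0 := by linear_combination hy
      rcases mul_eq_zero.mp this with h | h
      · rw [h]; exact Submodule.zero_mem _
      · have : y = 1 := by
          have := CharTwo.add_self_eq_zero (1:k)
          linear_combination h - this
        rw [this]; exact Submodule.mem_span_singleton_self _
    exact (Submodule.finrank_mono this).trans (finrank_span_singleton (K := ZMod 2) (one_ne_zero (α := k))).le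
  have r1 := LinearMap.finrank_range_add_finrank_ker φ'
  have r2 := LinearMap.finrank_range_add_finrank_ker (Algebra.trace (ZMod 2) k)
  have r3 : Module.finrank (ZMod 2) (LinearMap.range (Algebra.trace (ZMod 2) k)) = 1 := by
    rw [LinearMap.range_eq_top.mpr (Algebra.trace_surjective (ZMod 2) k)]
    simp
  have heq := Submodule.eq_of_le_of_finrank_le hle (by omega)
  have : c ∈ LinearMap.range φ' := by rw [heq]; exact hc
  obtain ⟨y, hy⟩ := this
  exact ⟨y, hy⟩

/-- Kloosterman sum (over nonzero elements). -/
def Kl (a : k) : ℝ := ∑ x : k, ps (x + a / x) - 1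

lemma Kl_eq [DecidableEq k] (a : k) : Kl a = ∑ x ∈ Finset.univ.filter (fun x : k => x ≠ 0), ps (x + a/x) := by
  unfold Kl
  rw [Finset.filter_ne' , ← Finset.add_sum_erase _ _ (Finset.mem_univ (0:k))]
  simp [ps_zero]

lemma Kl_abs (a : k) : |Kl a| ≤ Fintype.card k := by
  classical
  rw [Kl_eq]
  refine (Finset.abs_sum_le_sum_abs _ _).trans ?_
  simp only [ps_abs, Finset.sum_const, nsmul_eq_mul, mul_one]
  exact_mod_cast Finset.card_le_univ _

lemma Kl_stepanov [CharP k 2] (e : ℕ) (he : 1 ≤ e) (hc : Fintype.card k = (2^e)^2) (a : k) :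
    -(4 * 2^e) ≤ Kl a := by
  classical
  by_cases he1 : e = 1
  · have := Kl_abs a
    rw [hc, he1] at this
    norm_num at this
    rw [he1]
    have := neg_abs_le (Kl a)
    norm_num; linarith
  obtain ⟨δ, hδ⟩ := Algebra.trace_surjective (ZMod 2) k 1
  set S := Finset.univ.filter (fun x : k => x ≠ 0 ∧ Algebra.trace (ZMod 2) k (x + a/x) = 1) with hS
  have hb := stepanov e (by omega) hc a δ S (by
    intro x hx
    simp only [hS, Finset.mem_filter, Finset.mem_univ, true_and] at hx
    refine ⟨hx.1, artin_schreier _ ?_⟩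
    rw [map_add, hx.2, hδ]; decide)
  have hK : Kl a = (Fintype.card k - 1 : ℝ) - 2 * S.card := by
    have h1 : ∀ x : k, ps (x + a/x) = 1 - 2 * (if Algebra.trace (ZMod 2) k (x + a/x) = 1 then 1 else 0) := by
      intro x
      unfold ps
      rcases zmod2_cases (Algebra.trace (ZMod 2) k (x + a/x)) with h | h <;> rw [h] <;> simp [chi]
      norm_num
    rw [Kl_eq]
    simp only [h1]
    rw [Finset.sum_sub_distrib, ← Finset.mul_sum, Finset.sum_boole, Finset.filter_filter]
    rw [Finset.filter_ne', Finset.sum_const, Finset.card_erase_of_mem (Finset.mem_univ _)]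
    have : 1 ≤ Fintype.card k := Fintype.card_pos
    simp [Finset.card_univ, Nat.cast_sub this, hS]
  have hs := two_pow_pred e he
  have hb' : (S.card : ℝ) ≤ 2^(e-1) * 2^e + 2^(e-1) + 2^e := by exact_mod_cast hb
  have hs' : (2:ℝ)^e = 2^(e-1) + 2^(e-1) := by exact_mod_cast hs
  have h1 : (1:ℝ) ≤ 2^e := one_le_pow₀ (by norm_num)
  rw [hK, hc]
  push_cast
  have : (2:ℝ)^(e-1) = 2^e/2 := by linarith
  rw [this] at hb'
  nlinarith
end chars

set_option linter.unusedSectionVars false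
section quad
variable {k K : Type*} [Field k] [Fintype k] [Algebra (ZMod 2) k] [CharP k 2]
  [Field K] [Fintype K] [Algebra (ZMod 2) K] [CharP K 2] [Algebra k K]
  [IsScalarTower (ZMod 2) k K]

lemma mem_range_of_pow (z : K) (hz : z ^ Fintype.card k = z) : ∃ x : k, algebraMap k K x = z := by
  classical
  by_contra! hne
  set p : Polynomial K := Polynomial.X ^ Fintype.card k - Polynomial.X
  have hk : 1 < Fintype.card k := Fintype.one_lt_card
  have hp : p ≠ 0 := FiniteField.X_pow_card_sub_X_ne_zero K hk
  have hd : p.natDegree = Fintype.card k := FiniteField.X_pow_card_sub_X_natDegree_eq K hk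
  have hz' : z ∉ Finset.univ.image (algebraMap k K) := by
    simp only [Finset.mem_image, Finset.mem_univ, true_and, not_exists]; exact hne
  have := Polynomial.card_le_degree_of_subset_roots (p := p)
    (Z := insert z (Finset.univ.image (algebraMap k K))) (by
      intro w hw
      rw [Polynomial.mem_roots hp]
      simp only [p, Polynomial.IsRoot.def, Polynomial.eval_sub, Polynomial.eval_pow, Polynomial.eval_X]
      simp only [Finset.mem_val, Finset.mem_insert, Finset.mem_image, Finset.mem_univ, true_and] at hw
      rcases hw with rfl | ⟨x, rfl⟩
      · rw [hz, sub_self]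
      · rw [← map_pow, FiniteField.pow_card, sub_self])
  rw [Finset.card_insert_of_notMem hz', Finset.card_image_of_injective _ (algebraMap k K).injective,
    hd, Finset.card_univ] at this
  omega

lemma tr2 (hfr : Module.finrank k K = 2) (z : K) : algebraMap k K (Algebra.trace k K z) = z + z ^ Fintype.card k := by
  rw [FiniteField.algebraMap_trace_eq_sum_pow, hfr, Finset.sum_range_succ, Finset.sum_range_one]
  simp

lemma nm2 (hfr : Module.finrank k K = 2) (z : K) : algebraMap k K (Algebra.norm k z) = z * z ^ Fintype.card k := by
  rw [FiniteField.algebraMap_norm_eq_prod_pow, hfr, Finset.prod_range_succ, Finset.prod_range_one]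
  simp

lemma frob_add (hfr : Module.finrank k K = 2) (x y : K) : (x + y) ^ Fintype.card k = x ^ Fintype.card k + y ^ Fintype.card k := by
  obtain ⟨n, -, hn⟩ := FiniteField.card k 2
  rw [hn, add_pow_char_pow]

lemma frob_alg (hfr : Module.finrank k K = 2) (x : k) : (algebraMap k K x) ^ Fintype.card k = algebraMap k K x := by
  rw [← map_pow, FiniteField.pow_card]

lemma ps_K (hfr : Module.finrank k K = 2) (a : k) (z : K) : ps (z + algebraMap k K a / z) =
    ps (Algebra.trace k K z + a * Algebra.trace k K z / Algebra.norm k z) := by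
  unfold ps
  congr 1
  rw [← Algebra.trace_trace (S := k)]
  congr 1
  apply (algebraMap k K).injective
  rw [tr2 hfr, map_add, map_div₀, map_mul, tr2 hfr, nm2 hfr, frob_add hfr, div_pow, frob_alg hfr]
  by_cases hz : z = 0
  · subst hz; simp
  · have : z ^ Fintype.card k ≠ 0 := pow_ne_zero _ hz
    field_simp
    ring

lemma exists_root (hfr : Module.finrank k K = 2) (T N : k) : ∃ z : K, z^2 + algebraMap k K T * z + algebraMap k K N = 0 := by
  have two : (2:K) = 0 := CharTwo.two_eq_zero
  by_cases hT : T = 0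
  · obtain ⟨z, hz⟩ := FiniteField.isSquare_of_char_two (F := K) (CharP.ringChar_of_prime_eq_zero Nat.prime_two (by exact_mod_cast two)) (algebraMap k K N)
    refine ⟨z, ?_⟩
    rw [hz, hT, map_zero]
    linear_combination z^2 * two
  · obtain ⟨w, hw⟩ := artin_schreier (algebraMap k K (N / T^2)) (by
      rw [← Algebra.trace_trace (S := k), Algebra.trace_algebraMap, hfr]
      have : (2:k) = 0 := CharTwo.two_eq_zero
      rw [two_smul, CharTwo.add_self_eq_zero, map_zero])
    have hT' : algebraMap k K T ≠ 0 := by simpa using hT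
    refine ⟨algebraMap k K T * w, ?_⟩
    rw [map_div₀, map_pow, eq_div_iff (pow_ne_zero _ hT')] at hw
    linear_combination hw + algebraMap k K N * two

lemma count2 (hfr : Module.finrank k K = 2) [DecidableEq k] [DecidableEq K] (T N : k) :
    (Finset.univ.filter (fun z : K => (Algebra.trace k K z, Algebra.norm k z) = (T, N))).card +
    (Finset.univ.filter (fun p : k × k => (p.1 + p.2, p.1 * p.2) = (T, N))).card = 2 := by
  have two : (2:K) = 0 := CharTwo.two_eq_zero
  have two' : (2:k) = 0 := CharTwo.two_eq_zero
  have inj := (algebraMap k K).injective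
  obtain ⟨z0, hz0⟩ := exists_root (K := K) hfr T N
  set R := Finset.univ.filter
    (fun z : K => z^2 + algebraMap k K T * z + algebraMap k K N = 0) with hR
  have hRe : R = {z0, z0 + algebraMap k K T} := by
    ext z
    simp only [hR, Finset.mem_filter, Finset.mem_univ, true_and, Finset.mem_insert,
      Finset.mem_singleton]
    constructor
    · intro hz
      have : (z - z0) * (z - (z0 + algebraMap k K T)) = 0 := by
        linear_combination hz - hz0 + (-z * z0 + z0^2 + algebraMap k K T * (z0 - z)) * two
      rcases mul_eq_zero.mp this with h | h
      · left; linear_combination h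
      · right; linear_combination h
    · rintro (rfl | rfl)
      · exact hz0
      · linear_combination hz0 + (z0 * algebraMap k K T + algebraMap k K T ^ 2) * two
  have hA : Finset.univ.filter (fun z : K => (Algebra.trace k K z, Algebra.norm k z) = (T, N))
      = R.filter (fun z => z ^ Fintype.card k = z + algebraMap k K T) := by
    ext z
    simp only [hR, Finset.mem_filter, Finset.mem_univ, true_and, Prod.mk.injEq]
    rw [← inj.eq_iff, ← inj.eq_iff, tr2 hfr, nm2 hfr]
    constructor
    · rintro ⟨h1, h2⟩
      constructor
      · linear_combination h2 + z * h1 + (- z * z ^ Fintype.card k + algebraMap k K N + z * algebraMap k K T) * two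
      · linear_combination h1 - z * two
    · rintro ⟨h1, h2⟩
      rw [h2]
      constructor
      · linear_combination z * two
      · linear_combination h1 - algebraMap k K N * two
  have hB : (Finset.univ.filter (fun p : k × k => (p.1 + p.2, p.1 * p.2) = (T, N))).card
      = (R.filter (fun z => z ^ Fintype.card k = z)).card := by
    refine Finset.card_bij (fun p _ => algebraMap k K p.1) ?_ ?_ ?_
    · rintro ⟨x, y⟩ hp
      simp only [Finset.mem_filter, Finset.mem_univ, true_and, Prod.mk.injEq] at hp
      simp only [hR, Finset.mem_filter, Finset.mem_univ, true_and, frob_alg hfr, and_true]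
      rw [← hp.1, ← hp.2, map_add, map_mul]
      linear_combination (algebraMap k K x ^ 2 + algebraMap k K x * algebraMap k K y) * two
    · rintro ⟨x, y⟩ hp ⟨x', y'⟩ hp' h
      simp only [Finset.mem_filter, Finset.mem_univ, true_and, Prod.mk.injEq] at hp hp'
      have := inj h
      simp only at this
      subst this
      have : y = y' := by linear_combination hp.1 - hp'.1
      rw [this]
    · intro z hz
      simp only [hR, Finset.mem_filter, Finset.mem_univ, true_and] at hz
      obtain ⟨x, rfl⟩ := mem_range_of_pow (k := k) z hz.2
      refine ⟨(x, x + T), ?_, rfl⟩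
      have h1 : x^2 + T * x + N = 0 := by
        apply inj
        rw [map_add, map_add, map_mul, map_pow, map_zero]; exact hz.1
      simp only [Finset.mem_filter, Finset.mem_univ, true_and, Prod.mk.injEq]
      constructor
      · linear_combination x * two'
      · linear_combination h1 - N * two'
  rw [hA, hB]
  have hall : ∀ z ∈ R, z ^ Fintype.card k = z ∨ z ^ Fintype.card k = z + algebraMap k K T := by
    intro z hz
    simp only [hR, Finset.mem_filter, Finset.mem_univ, true_and] at hz
    have h1 := congrArg (· ^ Fintype.card k) hz
    simp only [frob_add hfr, mul_pow, frob_alg hfr] at h1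
    rw [zero_pow Fintype.card_ne_zero, ← pow_mul, mul_comm 2, pow_mul] at h1
    generalize z ^ Fintype.card k = w at *
    have : (w - z) * (w - (z + algebraMap k K T)) = 0 := by
      linear_combination h1 - hz + (- w * z + z^2 + algebraMap k K T * (z - w)) * two
    rcases mul_eq_zero.mp this with h | h
    · left; linear_combination h
    · right; linear_combination h
  by_cases hT : T = 0
  · have e1 : R.filter (fun z => z ^ Fintype.card k = z + algebraMap k K T) = R := by
      refine Finset.filter_true_of_mem fun z hz => ?_
      have := hall z hz
      rw [hT] at this ⊢
      simpa using this
    have e2 : R.filter (fun z => z ^ Fintype.card k = z) = R := by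
      refine Finset.filter_true_of_mem fun z hz => ?_
      have := hall z hz
      rw [hT] at this
      simpa using this
    rw [e1, e2, hRe, hT]
    simp
  · have hT' : algebraMap k K T ≠ 0 := by simpa using hT
    rw [← Finset.card_union_of_disjoint, ← Finset.filter_or, Finset.filter_true_of_mem, hRe,
      Finset.card_pair]
    · intro h; apply hT'; linear_combination -h
    · intro z hz; exact (hall z hz).symm
    · rw [Finset.disjoint_filter]
      intro z _ h1 h2
      apply hT'
      linear_combination h2 - h1

theorem Kl_quad (hfr : Module.finrank k K = 2) (a : k) (ha : a ≠ 0) :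
    Kl (algebraMap k K a) + Kl a ^ 2 = 2 * Fintype.card k := by
  classical
  set F : k × k → ℝ := fun p => ps (p.1 + a * p.1 / p.2) with hF
  set t : Finset (k × k) := Finset.univ ×ˢ Finset.univ.filter (fun x : k => x ≠ 0) with ht
  have h1 : Kl (algebraMap k K a) = ∑ p ∈ t, (Finset.univ.filter
      (fun z : K => (Algebra.trace k K z, Algebra.norm k z) = p)).card * F p := by
    rw [Kl_eq, ← Finset.sum_fiberwise_of_maps_to (t := t)
      (g := fun z => (Algebra.trace k K z, Algebra.norm k z))]
    · refine Finset.sum_congr rfl fun p hp => ?_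
      rw [Finset.filter_filter, Finset.sum_congr rfl (g := fun _ => F p), Finset.sum_const,
        nsmul_eq_mul]
      · congr 3
        ext z
        simp only [Finset.mem_filter, Finset.mem_univ, true_and]
        refine ⟨fun h => h.2, fun h => ⟨?_, h⟩⟩
        rintro rfl
        rw [← h] at hp
        simp [ht, Algebra.norm_zero] at hp
      · intro z hz
        simp only [Finset.mem_filter, Finset.mem_univ, true_and] at hz
        rw [ps_K hfr, ← hz.2]
    · intro z hz
      simp only [Finset.mem_filter, Finset.mem_univ, true_and] at hz
      simp [ht, hz]
  have h2 : Kl a ^ 2 = ∑ p ∈ t, (Finset.univ.filter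
      (fun q : k × k => (q.1 + q.2, q.1 * q.2) = p)).card * F p := by
    rw [Kl_eq, sq, Finset.sum_mul_sum, ← Finset.sum_product', 
      ← Finset.sum_fiberwise_of_maps_to (t := t) (g := fun q : k × k => (q.1 + q.2, q.1 * q.2))]
    · refine Finset.sum_congr rfl fun p hp => ?_
      rw [Finset.sum_congr rfl (g := fun _ => F p), Finset.sum_const,
        nsmul_eq_mul]
      · congr 3
        ext q
        simp only [Finset.mem_filter, Finset.mem_univ, true_and, Finset.mem_product]
        refine ⟨fun h => h.2, fun h => ⟨?_, h⟩⟩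
        rw [← h] at hp
        simpa [ht] using hp
      · rintro ⟨x, y⟩ hz
        simp only [Finset.mem_filter, Finset.mem_univ, true_and, Finset.mem_product] at hz
        rw [← ps_add, ← hz.2, hF]
        simp only
        congr 1
        have := hz.1.1
        have := hz.1.2
        field_simp
        ring
    · intro z hz
      simp only [Finset.mem_filter, Finset.mem_univ, true_and, Finset.mem_product] at hz
      simp [ht, hz]
  rw [h1, h2, ← Finset.sum_add_distrib]
  have h3 : ∀ p ∈ t, ((Finset.univ.filter
      (fun z : K => (Algebra.trace k K z, Algebra.norm k z) = p)).card * F p : ℝ) +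
      (Finset.univ.filter (fun q : k × k => (q.1 + q.2, q.1 * q.2) = p)).card * F p = 2 * F p := by
    intro p _
    rw [← add_mul]
    congr 1
    exact_mod_cast count2 hfr p.1 p.2
  rw [Finset.sum_congr rfl h3, ← Finset.mul_sum, ht, Finset.sum_product_right]
  congr 1
  rw [Finset.sum_eq_single a]
  · simp only [hF]
    rw [Finset.sum_congr rfl (g := fun _ => (1:ℝ))]
    · simp
    · intro x _
      rw [mul_div_cancel_left₀ _ ha, CharTwo.add_self_eq_zero, ps_zero]
  · intro b hb hne
    simp only [Finset.mem_filter, Finset.mem_univ, true_and] at hb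
    have : ∀ x : k, F (x, b) = ps ((1 + a / b) * x) := by
      intro x; simp only [hF]; congr 1; field_simp
    simp only [this]
    apply sum_ps
    intro h0
    apply hne
    have h0 : b + a = 0 := by field_simp at h0; simpa using h0
    exact CharTwo.add_eq_zero.mp h0
  · intro h; simp [ha] at h
end quad

theorem Kl_step (m : ℕ) : ∀ (k : Type) [Field k] [Fintype k] [Algebra (ZMod 2) k] [CharP k 2]
    (a : k), a ≠ 0 → |Kl a| ≤ (2 + 1 / 4 ^ m) * √(Fintype.card k) := by
  induction m with
  | zero =>
    intro k _ _ _ _ a ha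
    let K := FiniteField.Extension k 2 2
    have : Fintype K := Fintype.ofFinite K
    have : CharP K 2 := charP_of_injective_algebraMap (algebraMap k K).injective 2
    have hfr : Module.finrank k K = 2 := FiniteField.finrank_extension k 2 2
    have hq := Kl_quad (K := K) hfr a ha
    obtain ⟨n, -, hn⟩ := FiniteField.card k 2
    have hcK : Fintype.card K = (2^(n:ℕ))^2 := by
      rw [← hn, Fintype.card_eq_nat_card, Fintype.card_eq_nat_card]
      exact FiniteField.natCard_extension k 2 2
    have hst := Kl_stepanov (n:ℕ) n.2 hcK (algebraMap k K a)
    have hn' : (Fintype.card k : ℝ) = 2^(n:ℕ) := by rw [hn]; norm_cast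
    rw [← hn'] at hst
    apply abs_le_of_sq_le_sq _ (by positivity)
    rw [mul_pow, Real.sq_sqrt (by positivity)]
    have : (0:ℝ) ≤ Fintype.card k := by positivity
    norm_num
    linarith
  | succ m ih =>
    intro k _ _ _ _ a ha
    let K := FiniteField.Extension k 2 2
    have : Fintype K := Fintype.ofFinite K
    have : CharP K 2 := charP_of_injective_algebraMap (algebraMap k K).injective 2
    have hfr : Module.finrank k K = 2 := FiniteField.finrank_extension k 2 2
    have hq := Kl_quad (K := K) hfr a ha
    have hcK : Fintype.card K = (Fintype.card k)^2 := by
      rw [Fintype.card_eq_nat_card, Fintype.card_eq_nat_card]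
      exact FiniteField.natCard_extension k 2 2
    have h1 := ih K (algebraMap k K a) (by simpa using ha)
    rw [hcK, Nat.cast_pow, Real.sqrt_sq (by positivity)] at h1
    have h2 := neg_abs_le (Kl (algebraMap k K a))
    apply abs_le_of_sq_le_sq _ (by positivity)
    rw [mul_pow, Real.sq_sqrt (by positivity)]
    have h3 : (0:ℝ) ≤ Fintype.card k := by positivity
    have h4 : (2 + 1 / (4:ℝ)^(m+1))^2 ≥ 4 + 1/4^m := by
      have : 1 / (4:ℝ)^m = 4 * (1 / 4^(m+1)) := by rw [pow_succ]; field_simp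
      rw [this]; nlinarith [sq_nonneg (1 / (4:ℝ)^(m+1))]
    nlinarith

theorem Kl_bound (k : Type) [Field k] [Fintype k] [Algebra (ZMod 2) k] [CharP k 2]
    (a : k) (ha : a ≠ 0) : |Kl a| ≤ 2 * √(Fintype.card k) := by
  have h : Filter.Tendsto (fun m : ℕ => (2 + 1 / (4:ℝ) ^ m) * √(Fintype.card k)) Filter.atTop
      (nhds ((2 + 0) * √(Fintype.card k))) := by
    refine Filter.Tendsto.mul_const _ (Filter.Tendsto.const_add _ ?_)
    have := tendsto_pow_atTop_nhds_zero_of_lt_one (r := (1/4:ℝ)) (by norm_num) (by norm_num)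
    simpa [one_div, inv_pow] using this
  rw [add_zero] at h
  exact ge_of_tendsto' h fun m => Kl_step m k a ha

set_option linter.unusedSectionVars false
section core
variable {k : Type} [Field k] [Fintype k] [Algebra (ZMod 2) k] [CharP k 2]

def hhat (B z : k) : ℝ := ∑ y : k, ps (B / y + z * y)

lemma hhat_abs (B z : k) (hB : B ≠ 0) : |hhat B z| ≤ 2 * √(Fintype.card k) + 1 := by
  by_cases hz : z = 0
  · have : hhat B z = 0 := by
      unfold hhat
      rw [← sum_ps B hB, ← Equiv.sum_comp (Function.Involutive.toPerm (fun x : k => x⁻¹) inv_inv)]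
      refine Finset.sum_congr rfl fun y _ => ?_
      change ps (B / y⁻¹ + z * y⁻¹) = _
      simp [hz]
    rw [this, abs_zero]; positivity
  · have : hhat B z = Kl (B * z) + 1 := by
      unfold hhat Kl
      rw [sub_add_cancel, ← Equiv.sum_comp (Equiv.mulLeft₀ z hz) (fun x => ps (x + B * z / x))]
      refine Finset.sum_congr rfl fun y _ => ?_
      change ps (B / y + z * y) = ps (z * y + B * z / (z * y))
      congr 1
      rw [add_comm, mul_comm B z, mul_div_mul_left _ _ hz]
    rw [this]
    refine (abs_add_le _ _).trans ?_
    rw [abs_one]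
    exact add_le_add_left (Kl_bound k _ (mul_ne_zero hB hz)) 1

lemma sum_ps_mul [DecidableEq k] (w : k) :
    ∑ z : k, ps (z * w) = if w = 0 then (Fintype.card k : ℝ) else 0 := by
  split_ifs with h
  · simp [h, ps_zero]
  · simp only [mul_comm _ w]; exact sum_ps w h

lemma hhat_inv (B y : k) : ∑ z, hhat B z * ps (z * y) = Fintype.card k * ps (B / y) := by
  classical
  simp only [hhat, Finset.sum_mul]
  rw [Finset.sum_comm]
  have : ∀ w : k, ∑ z : k, ps (B / w + z * w) * ps (z * y) =
      ps (B / w) * (if w + y = 0 then (Fintype.card k : ℝ) else 0) := by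
    intro w
    rw [← sum_ps_mul, Finset.mul_sum]
    refine Finset.sum_congr rfl fun z _ => ?_
    rw [mul_add, ps_add, ps_add, mul_assoc]
  simp only [this, CharTwo.add_eq_zero]
  simp [mul_comm]

lemma core_bound [DecidableEq k] (L : k →+ k) (B : k) (hB : B ≠ 0) (ℓ : k →+ ZMod 2) :
    |∑ x, ps (B / L x) * chi (ℓ x)| ≤
      (Finset.univ.filter (fun x => L x = 0)).card * (2 * √(Fintype.card k) + 1) := by
  have hu : (0:ℝ) < Fintype.card k := by exact_mod_cast Fintype.card_pos
  set I : k → ℝ := fun z => ∑ x, ps (z * L x) * chi (ℓ x) with hI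
  have hI0 : ∀ z, 0 ≤ I z := by
    intro z
    let φ : k →+ ZMod 2 := ((Algebra.trace (ZMod 2) k).toAddMonoidHom.comp
      ((AddMonoidHom.mulLeft z).comp L)) + ℓ
    have hφ : I z = ∑ x, chi (φ x) := by
      refine Finset.sum_congr rfl fun x _ => ?_
      rw [ps, ← chi_add]; rfl
    rw [hφ]
    by_cases h : ∃ a, φ a ≠ 0
    · obtain ⟨a, ha⟩ := h
      rw [sum_chi_hom φ a ha]
    · push Not at h
      simp [h, chi_zero]
  have hIs : ∑ z, I z ≤ Fintype.card k * (Finset.univ.filter (fun x => L x = 0)).card := by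
    simp only [hI]
    rw [Finset.sum_comm]
    simp only [← Finset.sum_mul, sum_ps_mul]
    have : ∀ x, (if L x = 0 then (Fintype.card k : ℝ) else 0) * chi (ℓ x) ≤
        (if L x = 0 then (Fintype.card k : ℝ) else 0) := by
      intro x
      have := le_of_abs_le (chi_abs (ℓ x)).le
      split_ifs
      · nlinarith
      · simp
    refine (Finset.sum_le_sum fun x _ => this x).trans ?_
    rw [← Finset.sum_filter, Finset.sum_const, nsmul_eq_mul, mul_comm]
  have key : Fintype.card k * ∑ x, ps (B / L x) * chi (ℓ x) = ∑ z, hhat B z * I z := by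
    simp only [hI, Finset.mul_sum]
    rw [Finset.sum_comm]
    refine Finset.sum_congr rfl fun x _ => ?_
    rw [← mul_assoc, ← hhat_inv, Finset.sum_mul]
    exact Finset.sum_congr rfl fun z _ => by ring
  have h2 : |∑ z, hhat B z * I z| ≤ (2 * √(Fintype.card k) + 1) * ∑ z, I z := by
    refine (Finset.abs_sum_le_sum_abs _ _).trans ?_
    rw [Finset.mul_sum]
    refine Finset.sum_le_sum fun z _ => ?_
    rw [abs_mul, abs_of_nonneg (hI0 z)]
    exact mul_le_mul_of_nonneg_right (hhat_abs B z hB) (hI0 z)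
  rw [← key, abs_mul, abs_of_pos hu] at h2
  have h3 : (2 * √(Fintype.card k) + 1) * ∑ z, I z ≤ (2 * √(Fintype.card k) + 1) *
    (Fintype.card k * (Finset.univ.filter (fun x => L x = 0)).card) :=
    mul_le_mul_of_nonneg_left hIs (by positivity)
  refine le_of_mul_le_mul_left ((h2.trans h3).trans (le_of_eq ?_)) hu
  ring
end core

section main
variable {n : ℕ} [Fintype (Fq n)]

lemma derIter_append (p : Fq n → ZMod 2) (a : Fq n) (l : List (Fq n)) :
    derIter p (l ++ [a]) = derIter (der p a) l := by
  induction l with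
  | nil => rfl
  | cons b l ih => simp [derIter, ih]

lemma degLE_der {p : Fq n → ZMod 2} {r : ℕ} (hp : degLE p (r+1)) (a : Fq n) :
    degLE (der p a) r := by
  intro l hl
  rw [← derIter_append]
  exact hp _ (by simp [hl])

lemma affine_of_degLE {p : Fq n → ZMod 2} (hp : degLE p 1) :
    ∃ ℓ : Fq n →+ ZMod 2, ∀ x, p x = ℓ x + p 0 := by
  have h : ∀ a b x, p x + p (x + b) + (p (x + a) + p (x + a + b)) = 0 := by
    intro a b x
    have := congrFun (hp [a, b] rfl) x
    simpa [derIter, der] using this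
  have two : (2 : ZMod 2) = 0 := rfl
  refine ⟨{ toFun := fun x => p x + p 0
            map_zero' := by linear_combination p 0 * two
            map_add' := fun x y => ?_ }, fun x => ?_⟩
  · have := h x y 0
    simp only [zero_add] at this
    linear_combination this - (p x + p y + p 0) * two
  · simp only [AddMonoidHom.coe_mk, ZeroHom.coe_mk]
    linear_combination - p 0 * two

open Classical in
/-- `g` looks like `tr (B / L x)`. -/
def Good (m : ℕ) (g : Fq n → ZMod 2) (L : Fq n →+ Fq n) (B : Fq n) : Prop :=
  B ≠ 0 ∧ (Finset.univ.filter (fun x => L x = 0)).card ≤ 2^m ∧ ∀ x, L x ≠ 0 → g x = tr (B / L x)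

lemma good_base {m : ℕ} {g p : Fq n → ZMod 2} {L : Fq n →+ Fq n} {B : Fq n}
    (hg : Good m g L B) (hp : degLE p 1) :
    |∑ x, chi (g x + p x)| ≤ 2^m * (2 * √(Fintype.card (Fq n)) + 3) := by
  classical
  obtain ⟨hB, hc, hgx⟩ := hg
  obtain ⟨ℓ, hℓ⟩ := affine_of_degLE hp
  have hc' : ((Finset.univ.filter (fun x => L x = 0)).card : ℝ) ≤ 2^m := by
    have : (Finset.univ.filter (fun x => L x = 0)).card ≤ 2^m := by convert hc
    exact_mod_cast this
  have h1 := core_bound L B hB ℓ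
  have h2 : |∑ x, chi (g x + p x) - chi (p 0) * ∑ x, ps (B / L x) * chi (ℓ x)| ≤ 
      2 * (Finset.univ.filter (fun x => L x = 0)).card := by
    rw [Finset.mul_sum, ← Finset.sum_sub_distrib]
    refine (Finset.abs_sum_le_sum_abs _ _).trans ?_
    have : ∀ x, |chi (g x + p x) - chi (p 0) * (ps (B / L x) * chi (ℓ x))| ≤ 
        if L x = 0 then 2 else 0 := by
      intro x
      rw [hℓ, chi_add, chi_add]
      split_ifs with h
      · refine (abs_sub _ _).trans ?_
        simp only [abs_mul, chi_abs, ps_abs]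
        norm_num
      · rw [hgx x h]
        unfold ps tr
        apply le_of_eq
        rw [abs_eq_zero]; ring
    refine (Finset.sum_le_sum fun x _ => this x).trans ?_
    rw [← Finset.sum_filter, Finset.sum_const, nsmul_eq_mul, mul_comm]
  have h3 : |∑ x, chi (g x + p x)| ≤ 2 * (Finset.univ.filter (fun x => L x = 0)).card
      + (Finset.univ.filter (fun x => L x = 0)).card * (2 * √(Fintype.card (Fq n)) + 1) := by
    have e : ∑ x, chi (g x + p x) = (∑ x, chi (g x + p x) - chi (p 0) * ∑ x, ps (B / L x) * chi (ℓ x))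
      + chi (p 0) * ∑ x, ps (B / L x) * chi (ℓ x) := by ring
    rw [e]
    refine (abs_add_le _ _).trans (add_le_add h2 ?_)
    rw [abs_mul, chi_abs, one_mul]
    exact h1
  have hsq : 0 ≤ √(Fintype.card (Fq n) : ℝ) := Real.sqrt_nonneg _
  nlinarith

lemma good_step {m : ℕ} {g : Fq n → ZMod 2} {L : Fq n →+ Fq n} {B : Fq n}
    (hg : Good m g L B) (a : Fq n) (ha : L a ≠ 0) :
    ∃ L' B', Good (m+1) (der g a) L' B' := by
  classical
  obtain ⟨hB, hc, hgx⟩ := hg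
  refine ⟨{ toFun := fun x => L x * (L x + L a)
            map_zero' := by simp
            map_add' := fun x y => ?_ }, B * L a, mul_ne_zero hB ha, ?_, ?_⟩
  · have two : (2 : Fq n) = 0 := CharTwo.two_eq_zero
    rw [map_add]
    linear_combination L x * L y * two
  · set Z := Finset.univ.filter (fun x => L x = 0) with hZ
    have hc' : Z.card ≤ 2^m := by convert hc
    have hsub : Finset.univ.filter (fun x => L x * (L x + L a) = 0) ⊆ Z ∪ Z.image (· + a) := by
      intro x hx
      simp only [Finset.mem_filter, Finset.mem_univ, true_and] at hx
      rw [Finset.mem_union, Finset.mem_image]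
      rcases mul_eq_zero.mp hx with h | h
      · left; simp [hZ, h]
      · right
        refine ⟨x + a, by simp [hZ, h], ?_⟩
        rw [add_assoc, CharTwo.add_self_eq_zero, add_zero]
    have h1 := (Finset.card_le_card hsub).trans (Finset.card_union_le _ _)
    have h2 : (Z.image (· + a)).card ≤ Z.card := Finset.card_image_le
    rw [pow_succ]
    calc _ = (Finset.univ.filter (fun x => L x * (L x + L a) = 0)).card := by congr
      _ ≤ _ := by omega
  · intro x hx
    simp only [AddMonoidHom.coe_mk, ZeroHom.coe_mk] at hx ⊢
    have h1 : L x ≠ 0 := left_ne_zero_of_mul hx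
    have h2 : L x + L a ≠ 0 := right_ne_zero_of_mul hx
    unfold der
    rw [hgx x h1, hgx (x + a) (by rwa [map_add]), map_add]
    unfold tr
    rw [← map_add]
    congr 1
    have two : (2 : Fq n) = 0 := CharTwo.two_eq_zero
    field_simp
    linear_combination L x * two

lemma sq_sum (F : Fq n → ZMod 2) :
    (∑ x, chi (F x)) ^ 2 = ∑ a, ∑ x, chi (F x + F (x + a)) := by
  rw [sq, Finset.sum_mul_sum, Finset.sum_comm' (t' := Finset.univ) (s' := fun _ => Finset.univ) (by simp)]
  rw [Finset.sum_comm, Finset.sum_comm (s := Finset.univ) (t := Finset.univ)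
    (f := fun a x => chi (F x + F (x + a)))]
  refine Finset.sum_congr rfl fun x _ => ?_
  rw [← Equiv.sum_comp (Equiv.addLeft x)]
  exact Finset.sum_congr rfl fun a _ => by simp [chi_add]

lemma sum_chi_abs (F : Fq n → ZMod 2) : |∑ x, chi (F x)| ≤ Fintype.card (Fq n) := by
  refine (Finset.abs_sum_le_sum_abs _ _).trans ?_
  simp [chi_abs]

lemma good_rec (j : ℕ) : ∀ (m : ℕ) (g p : Fq n → ZMod 2) (L : Fq n →+ Fq n) (B : Fq n),
    Good m g L B → degLE p (j+1) →
    |∑ x, chi (g x + p x)| ^ (2^j) ≤ (Fintype.card (Fq n) : ℝ) ^ (2^j - 1) *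
      (2^(m+j) * (2 * √(Fintype.card (Fq n)) + 3) + (2^(m+j) - 2^m)) := by
  classical
  induction j with
  | zero =>
    intro m g p L B hg hp
    simpa using good_base hg hp
  | succ j ih =>
    intro m g p L B hg hp
    set u : ℝ := ((Fintype.card (Fq n) : ℕ) : ℝ) with hu
    have hu0 : 0 < u := by rw [hu]; exact_mod_cast Fintype.card_pos
    set τ : ℝ := 2^(m+1+j) * (2 * √u + 3) + (2^(m+1+j) - 2^(m+1)) with hτ
    have hτ0 : 0 ≤ τ := by
      have : (2:ℝ)^(m+1) ≤ 2^(m+1+j) := pow_le_pow_right₀ (by norm_num) (by omega)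
      have : (0:ℝ) ≤ 2^(m+1+j) * (2 * √u + 3) := by positivity
      linarith
    obtain ⟨N, hN⟩ : ∃ N, 2^j = N + 1 := ⟨2^j - 1, by have : 0 < 2^j := by positivity
                                                      omega⟩
    set y : Fq n → ℝ := fun a => |∑ x, chi (der g a x + der p a x)| with hy
    have hy0 : ∀ a, 0 ≤ y a := fun a => abs_nonneg _
    have h1 : |∑ x, chi (g x + p x)| ^ 2 ≤ ∑ a, y a := by
      rw [sq_abs, sq_sum (fun x => g x + p x)]
      refine Finset.sum_le_sum fun a _ => ?_
      refine le_trans (le_of_eq ?_) (le_abs_self _)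
      refine Finset.sum_congr rfl fun x _ => ?_
      congr 1
      simp only [der]; ring
    have hya : ∀ a, y a ^ (N+1) ≤ u ^ N * τ + if L a = 0 then u ^ N * u else 0 := by
      intro a
      split_ifs with h
      · have : y a ^ (N+1) ≤ u ^ (N+1) := pow_le_pow_left₀ (hy0 a) (sum_chi_abs _) _
        rw [pow_succ u] at this
        have : 0 ≤ u ^ N * τ := by positivity
        linarith
      · obtain ⟨L', B', hg'⟩ := good_step hg a h
        have := ih (m+1) (der g a) (der p a) L' B' hg' (degLE_der hp a)
        rw [hN, Nat.add_sub_cancel] at this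
        rw [add_zero]
        exact this
    have h2 := pow_sum_div_card_le_sum_pow (s := Finset.univ) (f := y) (fun a _ => hy0 a) N
    rw [div_le_iff₀ (by rw [Finset.card_univ]; positivity), Finset.card_univ, ← hu] at h2
    have h3 : ∑ a, y a ^ (N+1) ≤ u * (u^N * τ) + 2^m * (u^N * u) := by
      refine (Finset.sum_le_sum fun a _ => hya a).trans ?_
      rw [Finset.sum_add_distrib, ← Finset.sum_filter, Finset.sum_const, Finset.sum_const,
        nsmul_eq_mul, nsmul_eq_mul, Finset.card_univ]
      have hc : (Finset.univ.filter (fun x => L x = 0)).card ≤ 2^m := by convert hg.2.1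
      have hc' : ((Finset.univ.filter (fun x => L x = 0)).card : ℝ) ≤ 2^m := by exact_mod_cast hc
      have : 0 ≤ u^N * u := by positivity
      nlinarith
    have e1 : 2^(j+1) = 2 * (N+1) := by rw [pow_succ, hN]; ring
    have e2 : 2 * (N+1) - 1 = N + N + 1 := by omega
    rw [e1, e2, pow_mul]
    calc (|∑ x, chi (g x + p x)| ^ 2) ^ (N+1) ≤ (∑ a, y a) ^ (N+1) :=
          pow_le_pow_left₀ (by positivity) h1 _
      _ ≤ (∑ a, y a ^ (N+1)) * u ^ N := h2
      _ ≤ (u * (u^N * τ) + 2^m * (u^N * u)) * u^N :=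
          mul_le_mul_of_nonneg_right h3 (by positivity)
      _ = _ := by
          rw [hτ, show m + 1 + j = m + (j+1) by ring]
          ring
end main


lemma good_zero {n : ℕ} [Fintype (Fq n)] (hn : n ≠ 0)
    (f : Fq n → ZMod 2) (hf : ∀ x, f x = tr (x ^ (2 ^ n - 2))) :
    Good 0 f (AddMonoidHom.id _) 1 := by
  classical
  have hcard : Fintype.card (Fq n) = 2 ^ n := by
    rw [← Nat.card_eq_fintype_card]; exact GaloisField.card 2 n hn
  refine ⟨one_ne_zero, ?_, ?_⟩
  · refine (Finset.card_le_one.mpr ?_)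
    intro a ha b hb
    simp at ha hb
    rw [ha, hb]
  · intro x hx
    simp only [AddMonoidHom.id_apply] at hx ⊢
    rw [hf]
    congr 1
    have h := FiniteField.pow_card_sub_one_eq_one x hx
    rw [hcard] at h
    have h2 : 2 ≤ 2 ^ n := by
      calc 2 = 2 ^ 1 := rfl
        _ ≤ 2 ^ n := Nat.pow_le_pow_right (by norm_num) (by omega)
    rw [eq_div_iff hx, ← pow_succ, ← h]
    congr 1
    omega

lemma sum_hdist {n : ℕ} [Fintype (Fq n)] (f p : Fq n → ZMod 2) :
    (∑ x, chi (f x + p x)) = (Fintype.card (Fq n) : ℝ) - 2 * (hdist f p : ℝ) := by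
  classical
  have h : (hdist f p : ℝ) = ∑ x, if f x ≠ p x then (1:ℝ) else 0 := by
    rw [Finset.sum_boole, hdist, Set.ncard_eq_toFinset_card']
    congr 2
    ext x; simp
  rw [h, Finset.mul_sum, ← Finset.card_univ, Finset.cast_card, ← Finset.sum_sub_distrib]
  refine Finset.sum_congr rfl fun x _ => ?_
  have two : (1 : ZMod 2) + 1 = 0 := rfl
  rcases zmod2_cases (f x) with h1 | h1 <;> rcases zmod2_cases (p x) with h2 | h2 <;>
    simp [h1, h2, chi_zero, chi_one, two] <;> norm_num

lemma nl_spec {n : ℕ} (r : ℕ) (f : Fq n → ZMod 2) : ∃ p, degLE p r ∧ nl r f = hdist f p := by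
  have : nl r f ∈ {d : ℕ | ∃ g : Fq n → ZMod 2, degLE g r ∧ d = hdist f g} := by
    apply Nat.sInf_mem
    refine ⟨_, fun _ => 0, ?_, rfl⟩
    intro l _
    induction l with
    | nil => rfl
    | cons a l ih =>
      have : ∀ l : List (Fq n), derIter (fun _ : Fq n => (0 : ZMod 2)) l = fun _ => 0 := by
        intro l
        induction l with
        | nil => rfl
        | cons a l ih => funext x; simp [derIter, der, ih]
      exact this _
  exact this

lemma pow_aux (N : ℕ) (hN : 4 ≤ N) : 2 * N ≤ 2 ^ (N - 1) := by
  induction N, hN using Nat.le_induction with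
  | base => norm_num
  | succ k hk ih =>
    obtain ⟨j, rfl⟩ : ∃ j, k = j + 1 := ⟨k - 1, by omega⟩
    simp only [Nat.add_sub_cancel] at *
    rw [pow_succ]; omega

lemma numerics (n N : ℕ) (hN : 4 ≤ N) (S : ℝ) (hS0 : 0 ≤ S)
    (hS : S ^ N ≤ ((2:ℝ)^n) ^ (N-1) * (N * (2 * √((2:ℝ)^n) + 3) + (N - 1))) :
    S ≤ 2 * (2:ℝ) ^ ((1 - 1/(2*(N:ℝ))) * n - 1/(N:ℝ)) + 6 * (2:ℝ) ^ ((1/2 - 1/(2*(N:ℝ))) * n) := by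
  set M : ℝ := 2 * (2:ℝ) ^ ((1 - 1/(2*(N:ℝ))) * n - 1/(N:ℝ)) with hM
  set E : ℝ := 6 * (2:ℝ) ^ ((1/2 - 1/(2*(N:ℝ))) * n) with hE
  set u : ℝ := (2:ℝ)^n with hu
  have hu0 : 0 < u := by positivity
  have hM0 : 0 < M := by positivity
  have hE0 : 0 < E := by positivity
  have hNR : (4:ℝ) ≤ N := by exact_mod_cast hN
  have hN0 : (N:ℝ) ≠ 0 := by positivity
  have hsq : √u = (2:ℝ) ^ ((n:ℝ)/2) := by
    rw [Real.sqrt_eq_rpow, hu, ← Real.rpow_natCast 2 n, ← Real.rpow_mul (by norm_num)]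
    congr 1; ring
  have hs0 : 0 < √u := Real.sqrt_pos.mpr hu0
  have hMN : M ^ N = u ^ (N-1) * (2 ^ (N-1) * √u) := by
    have hM' : M = (2:ℝ) ^ (1 + ((1 - 1/(2*(N:ℝ))) * n - 1/(N:ℝ))) := by
      rw [Real.rpow_add (by norm_num), Real.rpow_one]
    have c : ((N - 1 : ℕ) : ℝ) = N - 1 := by push_cast [Nat.cast_sub (show 1 ≤ N by omega)]; ring
    rw [hM', hsq, hu, ← pow_mul, ← Real.rpow_natCast, ← Real.rpow_natCast, ← Real.rpow_natCast,
      ← Real.rpow_mul (by norm_num), ← Real.rpow_add (by norm_num), ← Real.rpow_add (by norm_num)]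
    congr 1
    push_cast
    rw [c]
    field_simp
    ring
  have hEM : 3 / √u ≤ E / M := by
    rw [div_le_div_iff₀ hs0 hM0, hM, hE, hsq, mul_assoc 6, ← Real.rpow_add (by norm_num)]
    have : (2:ℝ) ^ ((1 - 1/(2*(N:ℝ))) * n - 1/(N:ℝ)) ≤ 2 ^ ((1/2 - 1/(2*(N:ℝ))) * n + (n:ℝ)/2) := by
      apply Real.rpow_le_rpow_of_exponent_le (by norm_num)
      have : 0 ≤ 1/(N:ℝ) := by positivity
      nlinarith
    linarith
  have hb : 1 + N * (E / M) ≤ (1 + E / M) ^ N :=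
    one_add_mul_le_pow (by have : 0 < E / M := by positivity
                           linarith) N
  have h1 : M ^ N * (1 + N * (3 / √u)) ≤ (M + E) ^ N := by
    have : (M + E) ^ N = M ^ N * (1 + E / M) ^ N := by
      rw [← mul_pow]; congr 1; field_simp
    rw [this]
    refine mul_le_mul_of_nonneg_left (le_trans ?_ hb) (by positivity)
    gcongr
  have h2 : M ^ N * (1 + N * (3 / √u)) = u ^ (N-1) * (2 ^ (N-1) * √u + 3 * N * 2 ^ (N-1)) := by
    rw [hMN]; field_simp
  have h3 : 2 * (N:ℝ) ≤ 2 ^ (N-1) := by exact_mod_cast pow_aux N hN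
  have h4 : N * (2 * √u + 3) + (N - 1) ≤ 2 ^ (N-1) * √u + 3 * N * 2 ^ (N-1) := by
    nlinarith
  have h5 : S ^ N ≤ (M + E) ^ N := by
    refine hS.trans (le_trans ?_ h1)
    rw [h2]
    exact mul_le_mul_of_nonneg_left h4 (by positivity)
  exact le_of_pow_le_pow_left₀ (by omega) (by positivity) h5

/-- `r`-th order nonlinearity lower bound for the inverse function `tr(x^(2^n-2))`. -/
theorem rth_order_nl_inverse (n r : ℕ) (hr : 3 ≤ r) (hrn : r + 3 ≤ n)
    (f : Fq n → ZMod 2) (hf : ∀ x, f x = tr (x ^ (2 ^ n - 2))) :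
    (nl r f : ℝ) ≥ (2:ℝ) ^ ((n:ℝ) - 1)
      - (2:ℝ) ^ ((1 - (2:ℝ) ^ (-(r:ℝ))) * (n:ℝ) - (2:ℝ) ^ (-((r:ℝ) - 1)))
      - 3 * (2:ℝ) ^ ((1/2 - (2:ℝ) ^ (-(r:ℝ))) * (n:ℝ)) := by
  have hn : n ≠ 0 := by omega
  letI : Fintype (Fq n) := Fintype.ofFinite _
  have hcard : (Fintype.card (Fq n) : ℝ) = 2 ^ n := by
    have : Fintype.card (Fq n) = 2 ^ n := by
      rw [← Nat.card_eq_fintype_card]; exact GaloisField.card 2 n hn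
    rw [this]; push_cast; rfl
  obtain ⟨p, hp, hnl⟩ := nl_spec r f
  obtain ⟨j, rfl⟩ : ∃ j, r = j + 1 := ⟨r - 1, by omega⟩
  have h1 := good_rec j 0 f p _ _ (good_zero hn f hf) hp
  rw [hcard, sum_hdist, hcard, ← hnl] at h1
  have hN : 4 ≤ 2 ^ j := by
    calc 4 = 2 ^ 2 := rfl
      _ ≤ 2 ^ j := Nat.pow_le_pow_right (by norm_num) (by omega)
  have h2 := numerics n (2 ^ j) hN |(2:ℝ)^n - 2 * (nl (j+1) f : ℝ)| (abs_nonneg _) (by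
    refine h1.trans (le_of_eq ?_)
    push_cast
    simp only [zero_add, pow_zero])
  have e1 : (2:ℝ) ^ (-((j+1 : ℕ):ℝ)) = 1 / (2 * ((2 ^ j : ℕ) : ℝ)) := by
    rw [Real.rpow_neg (by norm_num), Real.rpow_natCast]; push_cast; rw [pow_succ, one_div, mul_comm]
  have e2 : (2:ℝ) ^ (-(((j+1 : ℕ):ℝ) - 1)) = 1 / ((2 ^ j : ℕ) : ℝ) := by
    have : (((j+1 : ℕ):ℝ) - 1) = (j:ℝ) := by push_cast; ring
    rw [this, Real.rpow_neg (by norm_num), Real.rpow_natCast]; push_cast; rw [one_div]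
  have e3 : (2:ℝ) ^ ((n:ℝ) - 1) = 2 ^ n / 2 := by
    rw [Real.rpow_sub (by norm_num), Real.rpow_natCast, Real.rpow_one]
  rw [e1, e2, e3]
  have h3 := le_of_abs_le h2
  linarith
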